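/- arXiv:1212.1682 — 2 statements merged into one kernel-verified Lean document; each statement's English description precedes it below -/
import Mathlib

section
/- There exists an integer k0 such that for all k >= k0, all c with 0 < c <= 2, r = 2^k * ln 2 - c, and all x with k * 2^{-k} <= x <= 1 and |x - 1/2| >= k * 2^{-k/2}, one has ln 2 + h(x) + r * ln(1 - 2^{1-k} + 2^{-k} * (1-x)^k) < 0, where h(x) = -x * ln x - (1-x) * ln(1-x) is the binary entropy function (extended continuously by h(0) = h(1) = 0). -/
/-!
With `q = 2⁻ᵏ` and `u = (1 - x)ᵏ`, the bound `log (1 - 2 * q + q * u) ≤ -q * (2 - u)` reduces the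
claim to a lower bound, of order `k / 2ᵏ`, on the gap `log 2 * (1 - u) - binEntropy x`.

For `x ≤ 1 / k` the entropy is at most `x * (1 - log x)`, while `1 - u ≥ k * x / (1 + k * x)` by
Bernoulli. At the lower end `x ≈ k / 2ᵏ` the leading terms `x * k * log 2` on both sides cancel and
the gap is still of order `x * log k`. Near `1 / 2` one has `u = O(2⁻ᵏ)`, which is dominated by the
quadratic entropy deficit `log 2 - binEntropy x ≥ 2 * (x - 1 / 2) ^ 2 ≥ 2 * k ^ 2 / 2ᵏ`. In between,
`u` is at most `1 / 2` and then exponentially small, and the gap is of order at least `1 / k ^ 2`.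
-/

section BinaryEntropy

open Real

lemma binEntropy_le_mul_one_sub_log {x : ℝ} (hx : x ≤ 1) : binEntropy x ≤ x * (1 - log x) := by
  have h := negMulLog_le_one_sub_self (sub_nonneg.2 hx)
  rw [binEntropy_eq_negMulLog_add_negMulLog_one_sub, negMulLog]
  linarith

lemma concaveOn_binEntropy_add_two_mul_sq :
    ConcaveOn ℝ (Set.Icc 0 1) fun x : ℝ ↦ binEntropy x + 2 * (x - 1 / 2) ^ 2 := by
  have hsq (x : ℝ) : HasDerivAt (fun x : ℝ ↦ 2 * (x - 1 / 2) ^ 2) (4 * (x - 1 / 2)) x := by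
    refine ((((hasDerivAt_id x).sub_const (1 / 2)).pow 2).const_mul 2).congr_deriv ?_
    simp only [id]
    ring
  refine concaveOn_of_hasDerivWithinAt2_nonpos (convex_Icc 0 1)
    (f' := fun x ↦ log (1 - x) - log x + 4 * (x - 1 / 2))
    (f'' := fun x ↦ -1 / (1 - x) - 1 / x + 4) (by fun_prop) ?_ ?_ ?_ <;>
    rw [interior_Icc] <;> rintro x ⟨hx0, hx1⟩
  · exact ((hasDerivAt_binEntropy hx0.ne' hx1.ne).add (hsq x)).hasDerivWithinAt
  · have hlog_sub := ((hasDerivAt_id x).const_sub 1).log (sub_pos.2 hx1).ne'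
    have hlog := (hasDerivAt_id x).log hx0.ne'
    have hlin := ((hasDerivAt_id x).sub_const (1 / 2)).const_mul 4
    exact (((hlog_sub.sub hlog).add hlin).congr_deriv (by simp only [id]; ring)).hasDerivWithinAt
  · have h1x : 0 < 1 - x := sub_pos.2 hx1
    have hsecond : -1 / (1 - x) - 1 / x + 4 = -(2 * x - 1) ^ 2 / (x * (1 - x)) := by
      field_simp
      ring
    rw [hsecond]
    exact div_nonpos_of_nonpos_of_nonneg (by nlinarith [sq_nonneg (2 * x - 1)]) (mul_pos hx0 h1x).le

-- Concavity and the symmetry `x ↦ 1 - x` put the maximum of `binEntropy x + 2 * (x - 1 / 2) ^ 2`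
-- at `1 / 2`.
lemma binEntropy_le_log_two_sub_two_mul_sq {x : ℝ} (hx0 : 0 ≤ x) (hx1 : x ≤ 1) :
    binEntropy x ≤ log 2 - 2 * (x - 1 / 2) ^ 2 := by
  have hmid := concaveOn_binEntropy_add_two_mul_sq.2 ⟨hx0, hx1⟩
    (⟨by linarith, by linarith⟩ : 1 - x ∈ Set.Icc (0 : ℝ) 1)
    (by norm_num : (0 : ℝ) ≤ 2⁻¹) (by norm_num : (0 : ℝ) ≤ 2⁻¹) (by norm_num)
  have hhalf : (2⁻¹ : ℝ) * x + 2⁻¹ * (1 - x) = 2⁻¹ := by ring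
  simp only [smul_eq_mul, hhalf, binEntropy_one_sub, binEntropy_two_inv] at hmid
  linarith

end BinaryEntropy

section Bernoulli

variable {x : ℝ}

lemma mul_div_one_add_mul_le_one_sub_pow (hx0 : 0 ≤ x) (hx1 : x ≤ 1) (k : ℕ) :
    k * x / (1 + k * x) ≤ 1 - (1 - x) ^ k := by
  have hprod : (1 - x) ^ k * (1 + k * x) ≤ 1 := calc
    (1 - x) ^ k * (1 + k * x) ≤ (1 - x) ^ k * (1 + x) ^ k := by
      gcongr
      exact one_add_mul_le_pow (by linarith) k
    _ = (1 - x ^ 2) ^ k := by rw [← mul_pow]; ring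
    _ ≤ 1 := pow_le_one₀ (by nlinarith) (by nlinarith)
  rw [div_le_iff₀ (by positivity)]
  linarith

lemma one_sub_pow_le_exp_div_two_pow {k : ℕ} {t : ℝ} (ht : -t ≤ k) (hx1 : x ≤ 1)
    (hx : (1 - t / k) / 2 ≤ x) : (1 - x) ^ k ≤ Real.exp t / 2 ^ k := calc
  (1 - x) ^ k ≤ ((1 - -t / k) / 2) ^ k := by
    gcongr
    rw [neg_div]
    linarith
  _ = (1 - -t / k) ^ k / 2 ^ k := div_pow _ _ _
  _ ≤ Real.exp t / 2 ^ k := by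
    gcongr
    simpa only [neg_neg] using Real.one_sub_div_pow_le_exp_neg ht

end Bernoulli

/-- The exponential growth rate, in the number `n` of variables, of the expected number of pairs of
satisfying assignments at Hamming distance `x * n` of a random `k`-CNF with `r * n` clauses. -/
noncomputable def pairExponent (k : ℕ) (r x : ℝ) : ℝ :=
  Real.log 2 + (-x * Real.log x - (1 - x) * Real.log (1 - x)) +
    r * Real.log (1 - (2 : ℝ) ^ ((1 : ℤ) - (k : ℤ)) + (2 : ℝ) ^ (-(k : ℤ)) * (1 - x) ^ k)

/-- The negative of the pair exponent at `r = 2 ^ k * log 2`, with `log (1 - y)` replaced by its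
linear upper bound `-y`. -/
noncomputable def entropyGap (k : ℕ) (x : ℝ) : ℝ :=
  Real.log 2 * (1 - (1 - x) ^ k) - Real.binEntropy x

section EntropyGap

open Real

variable {k : ℕ} {x : ℝ}

lemma log_one_sub_zpow_add_le (hk : 1 < k) (hx1 : x ≤ 1) :
    log (1 - (2 : ℝ) ^ ((1 : ℤ) - k) + (2 : ℝ) ^ (-(k : ℤ)) * (1 - x) ^ k) ≤
      -((2 - (1 - x) ^ k) / 2 ^ k) := by
  have hpow : 0 ≤ (1 - x) ^ k := pow_nonneg (sub_nonneg.2 hx1) k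
  have htwo : (2 : ℝ) < 2 ^ k := by simpa using pow_lt_pow_right₀ (one_lt_two (α := ℝ)) hk
  have harg : 1 - (2 : ℝ) ^ ((1 : ℤ) - k) + (2 : ℝ) ^ (-(k : ℤ)) * (1 - x) ^ k =
      1 - (2 - (1 - x) ^ k) / 2 ^ k := by
    rw [zpow_sub₀ two_ne_zero, zpow_neg, zpow_natCast, zpow_one]
    ring
  have hpos : 0 < 1 - (2 - (1 - x) ^ k) / 2 ^ k := by
    rw [sub_pos, div_lt_one (by positivity)]
    linarith
  rw [harg]
  linarith [log_le_sub_one_of_pos hpos]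

lemma pairExponent_le_sub_entropyGap {c B : ℝ} (hk : 1 < k) (hB : 0 ≤ B) (hc : c ≤ B)
    (hBk : B ≤ 2 ^ k * log 2) (hx0 : 0 ≤ x) (hx1 : x ≤ 1) :
    pairExponent k (2 ^ k * log 2 - c) x ≤ 2 * B / 2 ^ k - entropyGap k x := by
  have hpow0 : 0 ≤ (1 - x) ^ k := pow_nonneg (sub_nonneg.2 hx1) k
  have hpow1 : (1 - x) ^ k ≤ 1 := pow_le_one₀ (sub_nonneg.2 hx1) (by linarith)
  calc pairExponent k (2 ^ k * log 2 - c) x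
      ≤ log 2 + binEntropy x + (2 ^ k * log 2 - c) * -((2 - (1 - x) ^ k) / 2 ^ k) := by
        rw [binEntropy_eq_negMulLog_add_negMulLog_one_sub, pairExponent, negMulLog, negMulLog,
          neg_mul (1 - x), ← sub_eq_add_neg]
        gcongr
        · exact sub_nonneg.2 (hc.trans hBk)
        · exact log_one_sub_zpow_add_le hk hx1
    _ = (2 - (1 - x) ^ k) * c / 2 ^ k - entropyGap k x := by
        rw [entropyGap]
        field_simp
        ring
    _ ≤ 2 * B / 2 ^ k - entropyGap k x := by
        gcongr ?_ / _ - _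
        calc (2 - (1 - x) ^ k) * c ≤ (2 - (1 - x) ^ k) * B := by
              gcongr
              linarith
          _ ≤ 2 * B := by
              gcongr
              linarith

lemma mul_le_entropyGap (hx0 : 0 ≤ x) (hx1 : x ≤ 1) :
    x * (log 2 * (k / (1 + k * x)) + log x - 1) ≤ entropyGap k x := by
  have hpow := mul_le_mul_of_nonneg_left (mul_div_one_add_mul_le_one_sub_pow hx0 hx1 k)
    (log_pos one_lt_two).le
  have hentropy := binEntropy_le_mul_one_sub_log hx1
  have hassoc : log 2 * (k * x / (1 + k * x)) = x * (log 2 * (k / (1 + k * x))) := by ring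
  rw [entropyGap]
  linarith

lemma mul_log_sub_two_le_entropyGap (hk : 0 < k) (hkx : (k : ℝ) / 2 ^ k ≤ x)
    (hx : x ≤ 1 / (k : ℝ) ^ 2) : x * (log k - 2) ≤ entropyGap k x := by
  have hk1 : (1 : ℝ) ≤ k := by exact_mod_cast hk
  have hx0 : 0 < x := lt_of_lt_of_le (by positivity) hkx
  have hx1 : x ≤ 1 := hx.trans (div_le_one_of_le₀ (one_le_pow₀ hk1) (by positivity))
  have hlog : log k - k * log 2 ≤ log x := by
    rw [← log_pow, ← log_div (by positivity) (by positivity)]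
    exact log_le_log (by positivity) hkx
  have hfrac : (k : ℝ) - 1 ≤ k / (1 + k * x) := by
    rw [le_div_iff₀ (by positivity)] at hx ⊢
    nlinarith
  have hfrac_log := mul_le_mul_of_nonneg_left hfrac (log_pos one_lt_two).le
  calc x * (log k - 2) ≤ x * (log 2 * (k / (1 + k * x)) + log x - 1) := by
        refine mul_le_mul_of_nonneg_left ?_ hx0.le
        linarith [log_two_lt_d9]
    _ ≤ entropyGap k x := mul_le_entropyGap hx0.le hx1

lemma mul_sub_two_mul_log_le_entropyGap (hk : 0 < k) (hkx : 1 / (k : ℝ) ^ 2 ≤ x)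
    (hx : x ≤ 1 / k) : x * (k * log 2 / 2 - 2 * log k - 1) ≤ entropyGap k x := by
  have hk1 : (1 : ℝ) ≤ k := by exact_mod_cast hk
  have hx0 : 0 < x := lt_of_lt_of_le (by positivity) hkx
  have hx1 : x ≤ 1 := hx.trans (div_le_one_of_le₀ hk1 (by positivity))
  have hlog : -(2 * log k) ≤ log x := by
    have := log_le_log (by positivity) hkx
    rwa [one_div, log_inv, log_pow, Nat.cast_two] at this
  have hfrac : (k : ℝ) / 2 ≤ k / (1 + k * x) := by
    rw [le_div_iff₀ (by positivity)] at hx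
    gcongr
    linarith
  have hfrac_log := mul_le_mul_of_nonneg_left hfrac (log_pos one_lt_two).le
  calc x * (k * log 2 / 2 - 2 * log k - 1) ≤ x * (log 2 * (k / (1 + k * x)) + log x - 1) := by
        gcongr
        linarith
    _ ≤ entropyGap k x := mul_le_entropyGap hx0.le hx1

lemma one_div_ten_lt_entropyGap (hkx : 1 ≤ k * x) (hx0 : 0 ≤ x) (hx : x ≤ 1 / 16) :
    1 / 10 < entropyGap k x := by
  have hhalf : 1 / 2 ≤ 1 - (1 - x) ^ k := calc
    1 / 2 ≤ k * x / (1 + k * x) := by rw [le_div_iff₀ (by positivity)]; linarith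
    _ ≤ 1 - (1 - x) ^ k := mul_div_one_add_mul_le_one_sub_pow hx0 (by linarith) k
  have hentropy : binEntropy x ≤ 1 / 16 * (1 + 4 * log 2) := calc
    binEntropy x ≤ binEntropy (1 / 16) :=
      binEntropy_strictMonoOn.monotoneOn ⟨hx0, by linarith⟩ (by norm_num) hx
    _ ≤ 1 / 16 * (1 - log (1 / 16)) := binEntropy_le_mul_one_sub_log (by norm_num)
    _ = 1 / 16 * (1 + 4 * log 2) := by
      rw [one_div, log_inv, show (16 : ℝ) = 2 ^ 4 by norm_num, log_pow]
      push_cast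
      ring
  have hlog := mul_le_mul_of_nonneg_left hhalf (log_pos one_lt_two).le
  rw [entropyGap]
  linarith [log_two_gt_d9]

lemma two_mul_sq_sub_le_entropyGap (hx0 : 0 ≤ x) (hx1 : x ≤ 1) :
    2 * (x - 1 / 2) ^ 2 - log 2 * (1 - x) ^ k ≤ entropyGap k x := by
  rw [entropyGap]
  linarith [binEntropy_le_log_two_sub_two_mul_sq hx0 hx1]

end EntropyGap

section Asymptotics

open Real Filter

lemma eventually_mul_div_two_pow_lt (C : ℝ) {ε : ℝ} (hε : 0 < ε) :
    ∀ᶠ k : ℕ in atTop, C * k / 2 ^ k < ε := by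
  have h := (tendsto_pow_const_div_const_pow_of_one_lt 1 (one_lt_two (α := ℝ))).const_mul C
  simp only [pow_one, mul_zero, mul_div_assoc'] at h
  exact h.eventually_lt_const hε

lemma eventually_add_two_mul_log_lt (C : ℝ) :
    ∀ᶠ k : ℕ in atTop, C + 2 * log k < k * log 2 / 2 := by
  have hlog2 := log_pos one_lt_two
  have hlog := (isLittleO_log_id_atTop.comp_tendsto (tendsto_natCast_atTop_atTop (R := ℝ))).bound
    (c := log 2 / 8) (by positivity)
  have hlin := (tendsto_natCast_atTop_atTop (R := ℝ)).atTop_mul_const hlog2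
  filter_upwards [hlog, hlin.eventually_gt_atTop (4 * C)] with k hlogk hk
  simp only [Function.comp_apply, id, norm_eq_abs, Nat.abs_cast] at hlogk
  linarith [le_abs_self (log k)]

lemma eventually_mul_pow_add_lt_two_div_sq (C : ℝ) :
    ∀ᶠ k : ℕ in atTop, log 2 * (15 / 16) ^ k + C * k / 2 ^ k < 2 / (k : ℝ) ^ 2 := by
  have hpow := (tendsto_pow_const_mul_const_pow_of_lt_one 2 (r := (15 / 16 : ℝ)) (by norm_num)
    (by norm_num)).const_mul (log 2)
  have hcube := (tendsto_pow_const_div_const_pow_of_one_lt 3 (one_lt_two (α := ℝ))).const_mul C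
  have hsum := hpow.add hcube
  simp only [mul_zero, add_zero] at hsum
  filter_upwards [eventually_gt_atTop 0, hsum.eventually_lt_const two_pos] with k hk hlt
  rw [lt_div_iff₀ (by positivity)]
  convert hlt using 1
  ring

lemma eventually_forall_lt_entropyGap_of_le_one_div {C : ℝ} (hC : 0 ≤ C) :
    ∀ᶠ k : ℕ in atTop, ∀ x : ℝ, k / 2 ^ k ≤ x → x ≤ 1 / k → C * k / 2 ^ k < entropyGap k x := by
  have hlog := (tendsto_log_atTop.comp tendsto_natCast_atTop_atTop).eventually_gt_atTop (C + 2)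
  filter_upwards [eventually_gt_atTop 0, hlog, eventually_add_two_mul_log_lt (C + 1)]
    with k hk hlogk hlink x hkx hx
  have hx0 : 0 < x := lt_of_lt_of_le (by positivity) hkx
  have hCx : C * k / 2 ^ k ≤ x * C := by
    rw [mul_div_assoc, mul_comm x]
    gcongr
  rcases le_total x (1 / (k : ℝ) ^ 2) with hsq | hsq
  · calc C * k / 2 ^ k ≤ x * C := hCx
      _ < x * (log k - 2) := by gcongr; exact lt_sub_iff_add_lt.2 hlogk
      _ ≤ entropyGap k x := mul_log_sub_two_le_entropyGap hk hkx hsq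
  · calc C * k / 2 ^ k ≤ x * C := hCx
      _ < x * (k * log 2 / 2 - 2 * log k - 1) := by gcongr; linarith
      _ ≤ entropyGap k x := mul_sub_two_mul_log_le_entropyGap hk hsq hx

lemma eventually_forall_lt_entropyGap_of_le_half_sub (C : ℝ) :
    ∀ᶠ k : ℕ in atTop, ∀ x : ℝ, 1 / k ≤ x → x ≤ 1 / 2 - 1 / k →
      C * k / 2 ^ k < entropyGap k x := by
  filter_upwards [eventually_gt_atTop 0,
    eventually_mul_div_two_pow_lt C (ε := 1 / 10) (by norm_num),
    eventually_mul_pow_add_lt_two_div_sq C] with k hk hten hsq x hkx hx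
  have hkinv : (0 : ℝ) < 1 / k := by positivity
  have hx0 : 0 ≤ x := hkinv.le.trans hkx
  rcases le_total x (1 / 16) with hx16 | hx16
  · have hkx1 : 1 ≤ k * x := by rwa [div_le_iff₀' (by positivity)] at hkx
    exact hten.trans (one_div_ten_lt_entropyGap hkx1 hx0 hx16)
  · have hpow : log 2 * (1 - x) ^ k ≤ log 2 * (15 / 16) ^ k := by
      gcongr <;> linarith
    have hdist : 1 / (k : ℝ) ^ 2 ≤ (x - 1 / 2) ^ 2 := by
      rw [← one_div_pow, sub_sq_comm]
      gcongr
      linarith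
    have hgap := two_mul_sq_sub_le_entropyGap (k := k) hx0 (by linarith)
    rw [← mul_one_div 2] at hsq
    linarith

lemma eventually_forall_lt_entropyGap_of_half_sub_le (C : ℝ) :
    ∀ᶠ k : ℕ in atTop, ∀ x : ℝ, 1 / 2 - 1 / k ≤ x → x ≤ 1 →
      (k : ℝ) ^ 2 / 2 ^ k ≤ (x - 1 / 2) ^ 2 → C * k / 2 ^ k < entropyGap k x := by
  have hcast := tendsto_natCast_atTop_atTop (R := ℝ)
  filter_upwards [eventually_ge_atTop 2, hcast.eventually_ge_atTop C,
    hcast.eventually_gt_atTop (log 2 * exp 2)] with k hk hCk hexp x hkx hx1 hdist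
  have hk2 : (2 : ℝ) ≤ k := by exact_mod_cast hk
  have hx0 : 0 ≤ x := by
    have : 1 / (k : ℝ) ≤ 1 / 2 := by gcongr
    linarith
  have hpow : log 2 * (1 - x) ^ k ≤ log 2 * exp 2 / 2 ^ k := by
    rw [mul_div_assoc]
    gcongr
    exact one_sub_pow_le_exp_div_two_pow (by linarith) hx1 (le_of_eq_of_le (by ring) hkx)
  have hnum : C * k + log 2 * exp 2 < 2 * (k : ℝ) ^ 2 := by nlinarith
  have hdiv : C * k / 2 ^ k + log 2 * exp 2 / 2 ^ k < 2 * ((k : ℝ) ^ 2 / 2 ^ k) := by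
    rw [← add_div, mul_div_assoc']
    gcongr
  linarith [two_mul_sq_sub_le_entropyGap (k := k) hx0 hx1]

lemma eventually_forall_lt_entropyGap {C : ℝ} (hC : 0 ≤ C) :
    ∀ᶠ k : ℕ in atTop, ∀ x : ℝ, k / 2 ^ k ≤ x → x ≤ 1 →
      (k : ℝ) ^ 2 / 2 ^ k ≤ (x - 1 / 2) ^ 2 → C * k / 2 ^ k < entropyGap k x := by
  filter_upwards [eventually_forall_lt_entropyGap_of_le_one_div hC,
    eventually_forall_lt_entropyGap_of_le_half_sub C,
    eventually_forall_lt_entropyGap_of_half_sub_le C] with k hsmall hmid hhalf x hkx hx1 hdist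
  rcases le_total x (1 / k) with hx | hx
  · exact hsmall x hkx hx
  rcases le_total x (1 / 2 - 1 / k) with hx' | hx'
  · exact hmid x hx hx'
  · exact hhalf x hx' hx1 hdist

end Asymptotics

theorem statement8_general (C : ℝ) :
    ∀ᶠ k : ℕ in Filter.atTop, ∀ c : ℝ, c ≤ C * k →
      ∀ x : ℝ, (k : ℝ) * (2 : ℝ) ^ (-(k : ℝ)) ≤ x → x ≤ 1 →
        (k : ℝ) * (2 : ℝ) ^ (-(k : ℝ) / 2) ≤ |x - 1 / 2| →
        pairExponent k ((2 : ℝ) ^ k * Real.log 2 - c) x < 0 := by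
  filter_upwards [Filter.eventually_gt_atTop 1,
    eventually_mul_div_two_pow_lt |C| (Real.log_pos one_lt_two),
    eventually_forall_lt_entropyGap (C := 2 * |C|) (by positivity)]
    with k hk hCk hgap c hc x hkx hx1 hdist
  have hrpow : (2 : ℝ) ^ (-(k : ℝ)) = (2 ^ k)⁻¹ := by
    rw [Real.rpow_neg two_pos.le, Real.rpow_natCast]
  have hkx' : (k : ℝ) / 2 ^ k ≤ x := by rwa [div_eq_mul_inv, ← hrpow]
  have hdist' : (k : ℝ) ^ 2 / 2 ^ k ≤ (x - 1 / 2) ^ 2 := calc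
    (k : ℝ) ^ 2 / 2 ^ k = (k * (2 : ℝ) ^ (-(k : ℝ) / 2)) ^ 2 := by
      rw [mul_pow, ← Real.rpow_mul_natCast two_pos.le, Nat.cast_two, div_mul_cancel₀ _ two_ne_zero,
        hrpow, div_eq_mul_inv]
    _ ≤ |x - 1 / 2| ^ 2 := by gcongr
    _ = (x - 1 / 2) ^ 2 := sq_abs _
  have hx0 : 0 ≤ x := le_trans (by positivity) hkx'
  have hc' : c ≤ |C| * k := hc.trans (by gcongr; exact le_abs_self C)
  have hupper := pairExponent_le_sub_entropyGap hk (by positivity) hc'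
    ((div_lt_iff₀' (by positivity)).1 hCk).le hx0 hx1
  rw [← mul_assoc] at hupper
  linarith [hgap x hkx' hx1 hdist']

/-- For all large `k`, all `0 < c ≤ 2` and `r = 2^k ln 2 - c`, and all
`x ∈ [k 2^{-k}, 1]` with `|x - 1/2| ≥ k 2^{-k/2}`:
`ln 2 + h(x) + r ln(1 - 2^{1-k} + 2^{-k}(1-x)^k) < 0`, where `h` is the binary entropy
(note `Real.log 0 = 0`, so the formula extends `h` continuously to `0` and `1`). -/
theorem statement8 :
    ∃ k0 : ℕ, ∀ k : ℕ, k0 ≤ k → ∀ c : ℝ, 0 < c → c ≤ 2 →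
      ∀ x : ℝ, (k : ℝ) * (2 : ℝ) ^ (-(k : ℝ)) ≤ x → x ≤ 1 →
        (k : ℝ) * (2 : ℝ) ^ (-(k : ℝ) / 2) ≤ |x - 1 / 2| →
        Real.log 2 + (-x * Real.log x - (1 - x) * Real.log (1 - x)) +
            ((2 : ℝ) ^ k * Real.log 2 - c) *
              Real.log (1 - (2 : ℝ) ^ ((1 : ℤ) - (k : ℤ)) +
                (2 : ℝ) ^ (-(k : ℤ)) * (1 - x) ^ k) < 0 := by
  obtain ⟨k0, h⟩ := Filter.eventually_atTop.1
    ((statement8_general 2).and (Filter.eventually_ge_atTop 1))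
  exact ⟨k0, fun k hk c _ hc ↦ (h k hk).1 c <| hc.trans <|
    le_mul_of_one_le_right zero_le_two (mod_cast (h k hk).2)⟩
end

section
/- There exists an integer k0 such that for every k >= k0 and every density r = 2^k * ln 2 - rho with 0 < rho <= 2, with high probability the degree sequence (d_l)_l of the uniform random formula Phi = Phi_k(n, floor(r*n)) has both of the following properties: for every set S of literals, Vol(S) <= 10 * |S| * max{k*r, ln(n/|S|)}; and for every set S of literals with |S| >= n * 2^{-0.8k}, Vol(S) >= (1/3) * |S| * k * r, where Vol(S) = sum over l in S of d_l. -/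
open Classical Finset Filter

noncomputable section

/-- A literal: a variable index together with a sign (`true` = positive occurrence). -/
abbrev Lit (n : ℕ) := Fin n × Bool

/-- A clause: an ordered `k`-tuple of literals. -/
abbrev Clause (n k : ℕ) := Fin k → Lit n

/-- A `k`-CNF formula with `m` clauses over `n` variables. -/
abbrev Formula (n k m : ℕ) := Fin m → Clause n k

/-- A truth assignment. -/
abbrev Assignment (n : ℕ) := Fin n → Bool

/-- The truth value of a literal under an assignment. -/
def litVal {n : ℕ} (σ : Assignment n) (l : Lit n) : Bool :=
  if l.2 then σ l.1 else !(σ l.1)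

/-- `σ` satisfies `Φ` if every clause contains at least one true literal. -/
def Satisfies {n k m : ℕ} (σ : Assignment n) (Φ : Formula n k m) : Prop :=
  ∀ i : Fin m, ∃ j : Fin k, litVal σ (Φ i j) = true

/-- The set of satisfying assignments of `Φ`. -/
def satSet (n k m : ℕ) (Φ : Formula n k m) : Finset (Assignment n) :=
  univ.filter fun σ => Satisfies σ Φ

/-- The number of satisfying assignments of `Φ`. -/
def satCount (n k m : ℕ) (Φ : Formula n k m) : ℕ := (satSet n k m Φ).card

/-- Probability of an event under the uniformly random formula `Φ_k(n,m)`. -/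
def prF (n k m : ℕ) (E : Formula n k m → Prop) : ℝ :=
  ((univ.filter fun Φ : Formula n k m => E Φ).card : ℝ) / (Fintype.card (Formula n k m) : ℝ)

/-- Expectation of a function of the uniformly random formula `Φ_k(n,m)`. -/
def expF (n k m : ℕ) (f : Formula n k m → ℝ) : ℝ :=
  (∑ Φ : Formula n k m, f Φ) / (Fintype.card (Formula n k m) : ℝ)

/-- The number of occurrences of the literal `l` in `Φ`. -/
def occ (n k m : ℕ) (Φ : Formula n k m) (l : Lit n) : ℕ :=
  (univ.filter fun p : Fin m × Fin k => Φ p.1 p.2 = l).card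

/-- The (signed) degree sequence of `Φ`. -/
def degSeq (n k m : ℕ) (Φ : Formula n k m) : Lit n → ℕ := occ n k m Φ

/-- Hamming distance between two assignments. -/
def hdist {n : ℕ} (σ τ : Assignment n) : ℕ :=
  (univ.filter fun x => σ x ≠ τ x).card

/-- The majority-vote assignment: `x ↦ true` iff `x` occurs more often positively
than negatively. -/
def sigmaMaj (n k m : ℕ) (Φ : Formula n k m) : Assignment n :=
  fun x => decide (occ n k m Φ (x, false) < occ n k m Φ (x, true))

/-- `Vol(S) = ∑_{l ∈ S} d_l`. -/
def Vol (n k m : ℕ) (Φ : Formula n k m) (S : Finset (Lit n)) : ℕ :=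
  ∑ l ∈ S, occ n k m Φ l

/-!
`Vol Φ S` counts the `k * m` independent uniform literals of `Φ` that fall into `S`, so it is
binomial with mean `k * m * |S| / (2 * n)`, about `|S| * k * r / 2`. The Chernoff exponent for a
single `S` beats the entropy `|S| * (1 + log (2 * n / |S|))` of choosing `S` among the sets of its
size: above `10 * |S| * max (k * r) (log (n / |S|))` because the maximum dominates `log (n / |S|)`,
and below `|S| * k * r / 3` because for `|S| ≥ n * 2 ^ (-0.8 * k)` the entropy is only `O(k)` per
element of `S`, while the Chernoff exponent is of order `k * r`. The exponential tilt is `t = 1` for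
the upper tail and `t = log (2 / 3)` for the lower one, whose threshold is `2 / 3` of the mean.
-/

lemma sum_inv_choose_card (α : Type*) [Fintype α] :
    ∑ S : Finset α, ((Fintype.card α).choose #S : ℝ)⁻¹ = Fintype.card α + 1 := by
  have h_slice : ∀ s ∈ range (Fintype.card α + 1),
      (Fintype.card α).choose s • ((Fintype.card α).choose s : ℝ)⁻¹ = 1 := fun s hs => by
    have : ((Fintype.card α).choose s : ℝ) ≠ 0 :=
      mod_cast (Nat.choose_pos (mem_range_succ_iff.mp hs)).ne'
    rw [nsmul_eq_mul, mul_inv_cancel₀ this]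
  rw [← powerset_univ, sum_powerset_apply_card (fun s => ((Fintype.card α).choose s : ℝ)⁻¹),
    card_univ, sum_congr rfl h_slice]
  simp

lemma choose_le_exp {N s : ℕ} (hN : 0 < N) (hs : 0 < s) :
    (N.choose s : ℝ) ≤ Real.exp (s * (1 + Real.log (N / s))) := by
  calc (N.choose s : ℝ) ≤ (N : ℝ) ^ s / s.factorial := Nat.choose_le_pow_div s N
    _ = (s : ℝ) ^ s / s.factorial * (N / s : ℝ) ^ s := by rw [div_pow]; field_simp
    _ ≤ Real.exp s * (N / s : ℝ) ^ s := by
      gcongr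
      exact Real.pow_div_factorial_le_exp _ (Nat.cast_nonneg s) s
    _ = Real.exp (s * (1 + Real.log (N / s))) := by
      rw [mul_one_add, Real.exp_add, Real.exp_nat_mul, Real.exp_log (by positivity)]

lemma neg_log_two_thirds_le : -Real.log (2 / 3) ≤ 0.42 := by
  rw [← Real.log_inv, Real.log_le_iff_le_exp (by norm_num)]
  have h_exp := Real.quadratic_le_exp_of_nonneg (x := 0.42) (by norm_num)
  norm_num at h_exp ⊢
  linarith

lemma tendsto_two_mul_add_one_mul_inv_sq :
    Tendsto (fun n : ℕ => (2 * n + 1) * ((n : ℝ) ^ 2)⁻¹) atTop (nhds 0) := by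
  have h_inv := tendsto_inv_atTop_nhds_zero_nat (𝕜 := ℝ)
  have h_sum := (h_inv.const_mul 2).add (h_inv.pow 2)
  rw [mul_zero, zero_pow two_ne_zero, add_zero] at h_sum
  refine h_sum.congr' ?_
  filter_upwards [eventually_ne_atTop 0] with n hn
  field_simp

lemma tendsto_two_mul_add_one_mul_exp_neg {c : ℝ} (hc : 0 < c) :
    Tendsto (fun n : ℕ => (2 * n + 1) * Real.exp (-(c * n))) atTop (nhds 0) := by
  have h_lin : Tendsto (fun n : ℕ => c * (n : ℝ)) atTop atTop :=
    tendsto_natCast_atTop_atTop.const_mul_atTop hc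
  have h_mul_exp := (Real.tendsto_pow_mul_exp_neg_atTop_nhds_zero 1).comp h_lin
  have h_exp := (Real.tendsto_pow_mul_exp_neg_atTop_nhds_zero 0).comp h_lin
  have h_sum := (h_mul_exp.const_mul (2 / c)).add h_exp
  rw [mul_zero, add_zero] at h_sum
  refine h_sum.congr fun n => ?_
  simp only [Function.comp_apply]
  field_simp

section RandomFormula

variable {n k m : ℕ}

lemma expF_mono {f g : Formula n k m → ℝ} (h : ∀ Φ, f Φ ≤ g Φ) :
    expF n k m f ≤ expF n k m g :=
  div_le_div_of_nonneg_right (sum_le_sum fun Φ _ => h Φ) (Nat.cast_nonneg _)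

lemma expF_add (f g : Formula n k m → ℝ) :
    expF n k m (fun Φ => f Φ + g Φ) = expF n k m f + expF n k m g := by
  simp only [expF, sum_add_distrib, add_div]

lemma expF_mul_const (f : Formula n k m → ℝ) (c : ℝ) :
    expF n k m (fun Φ => f Φ * c) = expF n k m f * c := by
  simp only [expF, ← sum_mul, mul_div_right_comm]

lemma expF_sum {ι : Type*} (I : Finset ι) (f : ι → Formula n k m → ℝ) :
    expF n k m (fun Φ => ∑ i ∈ I, f i Φ) = ∑ i ∈ I, expF n k m (f i) := by
  simp only [expF, sum_comm (s := univ), sum_div]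

lemma prF_eq_expF (E : Formula n k m → Prop) :
    prF n k m E = expF n k m fun Φ => if E Φ then 1 else 0 := by
  rw [prF, expF, sum_boole]

lemma prF_le_one (E : Formula n k m → Prop) : prF n k m E ≤ 1 :=
  div_le_one_of_le₀ (mod_cast card_le_univ _) (Nat.cast_nonneg _)

lemma prF_nonneg (E : Formula n k m → Prop) : 0 ≤ prF n k m E := by
  unfold prF; positivity

lemma prF_le_expF {E : Formula n k m → Prop} {f : Formula n k m → ℝ} (hf : ∀ Φ, 0 ≤ f Φ)
    (hE : ∀ Φ, E Φ → 1 ≤ f Φ) : prF n k m E ≤ expF n k m f := by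
  rw [prF_eq_expF]
  refine expF_mono fun Φ => ?_
  split_ifs with h
  exacts [hE Φ h, hf Φ]

lemma prF_le_add_of_imp_or {E A B : Formula n k m → Prop} (h : ∀ Φ, E Φ → A Φ ∨ B Φ) :
    prF n k m E ≤ prF n k m A + prF n k m B := by
  rw [prF_eq_expF A, prF_eq_expF B, ← expF_add]
  refine prF_le_expF (fun Φ => by positivity) fun Φ hΦ => ?_
  rcases h Φ hΦ with hA | hB
  · rw [if_pos hA]
    exact le_add_of_nonneg_right (by positivity)
  · rw [if_pos hB]
    exact le_add_of_nonneg_left (by positivity)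

lemma prF_mono {E F : Formula n k m → Prop} (h : ∀ Φ, E Φ → F Φ) :
    prF n k m E ≤ prF n k m F := by
  rw [prF_eq_expF F]
  exact prF_le_expF (fun Φ => by positivity) fun Φ hΦ => (if_pos (h Φ hΦ)).ge

lemma prF_exists_mem_le_sum {ι : Type*} (I : Finset ι) (Q : Formula n k m → ι → Prop) :
    prF n k m (fun Φ => ∃ i ∈ I, Q Φ i) ≤ ∑ i ∈ I, prF n k m fun Φ => Q Φ i := by
  simp only [prF_eq_expF fun Φ => Q Φ _, ← expF_sum]
  refine prF_le_expF (fun Φ => by positivity) fun Φ ⟨i, hi, hQ⟩ => ?_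
  calc (1 : ℝ) = if Q Φ i then 1 else 0 := (if_pos hQ).symm
    _ ≤ ∑ j ∈ I, if Q Φ j then 1 else 0 :=
      single_le_sum (f := fun j => if Q Φ j then (1 : ℝ) else 0) (fun j _ => by positivity) hi

lemma card_formula (n k m : ℕ) : (Fintype.card (Formula n k m) : ℝ) = (2 * n : ℝ) ^ (k * m) := by
  simp [mul_comm, pow_mul]

lemma one_sub_prF_not_le (hn : n ≠ 0) (E : Formula n k m → Prop) :
    1 - prF n k m (fun Φ => ¬ E Φ) ≤ prF n k m E := by
  have expF_one : expF n k m (fun _ => 1) = 1 := by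
    have : (Fintype.card (Formula n k m) : ℝ) ≠ 0 := by rw [card_formula]; positivity
    simpa [expF] using div_self this
  rw [sub_le_iff_le_add, ← expF_one, prF_eq_expF, prF_eq_expF, ← expF_add]
  refine expF_mono fun Φ => ?_
  by_cases h : E Φ <;> simp [h]

lemma card_lit (n : ℕ) : Fintype.card (Lit n) = 2 * n := by
  simp [mul_comm]

lemma card_le_two_mul (S : Finset (Lit n)) : #S ≤ 2 * n :=
  (card_le_univ S).trans_eq (card_lit n)

-- Each of the `2 * n + 1` possible sizes of `S` contributes at most `q`.
lemma prF_exists_le_of_choose_mul_prF_le {p : Finset (Lit n) → Prop}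
    {Q : Formula n k m → Finset (Lit n) → Prop} {q : ℝ} (hq : 0 ≤ q)
    (h : ∀ S, p S → (2 * n).choose #S * prF n k m (fun Φ => Q Φ S) ≤ q) :
    prF n k m (fun Φ => ∃ S, p S ∧ Q Φ S) ≤ (2 * n + 1) * q := by
  have h_single : ∀ S ∈ univ.filter p,
      prF n k m (fun Φ => Q Φ S) ≤ ((2 * n).choose #S : ℝ)⁻¹ * q := fun S hS => by
    have : (0 : ℝ) < (2 * n).choose #S := mod_cast Nat.choose_pos (card_le_two_mul S)
    rw [inv_mul_eq_div, le_div_iff₀' this]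
    exact h S (mem_filter.mp hS).2
  calc prF n k m (fun Φ => ∃ S, p S ∧ Q Φ S)
      = prF n k m (fun Φ => ∃ S ∈ univ.filter p, Q Φ S) := by simp only [mem_filter_univ]
    _ ≤ ∑ S ∈ univ.filter p, prF n k m (fun Φ => Q Φ S) := prF_exists_mem_le_sum _ _
    _ ≤ ∑ S ∈ univ.filter p, ((2 * n).choose #S : ℝ)⁻¹ * q := sum_le_sum h_single
    _ ≤ ∑ S : Finset (Lit n), ((2 * n).choose #S : ℝ)⁻¹ * q :=
      sum_le_univ_sum_of_nonneg fun S => by positivity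
    _ = (2 * n + 1) * q := by
      rw [← sum_mul, ← card_lit n, sum_inv_choose_card, card_lit]
      push_cast
      rfl

lemma vol_eq_sum_ite (Φ : Formula n k m) (S : Finset (Lit n)) :
    (Vol n k m Φ S : ℝ) = ∑ i, ∑ j, if Φ i j ∈ S then (1 : ℝ) else 0 := by
  simp only [Vol, occ, card_filter]
  push_cast
  rw [sum_comm, Fintype.sum_prod_type]
  simp only [sum_ite_eq]

lemma sum_exp_mul_vol (S : Finset (Lit n)) (t : ℝ) :
    ∑ Φ : Formula n k m, Real.exp (t * Vol n k m Φ S)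
      = (2 * n + #S * (Real.exp t - 1)) ^ (k * m) := by
  have h_literal : ∑ l : Lit n, Real.exp (t * if l ∈ S then 1 else 0)
      = 2 * n + #S * (Real.exp t - 1) := by
    have h_ite (l : Lit n) : Real.exp (t * if l ∈ S then 1 else 0)
        = 1 + if l ∈ S then Real.exp t - 1 else 0 := by
      split_ifs <;> simp
    simp only [h_ite, sum_add_distrib, sum_ite_mem, univ_inter, sum_const, card_univ, card_lit,
      nsmul_eq_mul]
    push_cast
    ring
  simp only [← h_literal, pow_mul, Fintype.sum_pow, vol_eq_sum_ite, mul_sum, Real.exp_sum]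

lemma expF_exp_mul_vol_le (hn : n ≠ 0) (S : Finset (Lit n)) (t : ℝ) :
    expF n k m (fun Φ => Real.exp (t * Vol n k m Φ S))
      ≤ Real.exp (#S * (Real.exp t - 1) * (k * m) / (2 * n)) := by
  have hS : (#S : ℝ) ≤ 2 * n := mod_cast card_le_two_mul S
  have h_nonneg : 0 ≤ 2 * n + #S * (Real.exp t - 1) := by
    have : 0 ≤ #S * Real.exp t := by positivity
    linarith
  rw [expF, sum_exp_mul_vol, card_formula, ← div_pow]
  calc ((2 * n + #S * (Real.exp t - 1)) / (2 * n : ℝ)) ^ (k * m)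
      = (#S * (Real.exp t - 1) / (2 * n) + 1) ^ (k * m) := by
        congr 1
        field_simp
        ring
    _ ≤ Real.exp (#S * (Real.exp t - 1) / (2 * n)) ^ (k * m) := by
        refine pow_le_pow_left₀ ?_ (Real.add_one_le_exp _) _
        rw [div_add_one (by positivity), add_comm]
        positivity
    _ = Real.exp (#S * (Real.exp t - 1) * (k * m) / (2 * n)) := by
        rw [← Real.exp_nat_mul]
        congr 1
        push_cast
        ring

lemma prF_le_mul_vol_le (hn : n ≠ 0) (S : Finset (Lit n)) (t a : ℝ) :
    prF n k m (fun Φ => a ≤ t * Vol n k m Φ S)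
      ≤ Real.exp (#S * (Real.exp t - 1) * (k * m) / (2 * n) - a) := by
  calc prF n k m (fun Φ => a ≤ t * Vol n k m Φ S)
      ≤ expF n k m (fun Φ => Real.exp (t * Vol n k m Φ S) * Real.exp (-a)) := by
        refine prF_le_expF (fun Φ => by positivity) fun Φ hΦ => ?_
        rw [← Real.exp_add, ← sub_eq_add_neg]
        exact Real.one_le_exp (sub_nonneg.mpr hΦ)
    _ ≤ Real.exp (#S * (Real.exp t - 1) * (k * m) / (2 * n)) * Real.exp (-a) := by
        rw [expF_mul_const]
        gcongr
        exact expF_exp_mul_vol_le hn S t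
    _ = Real.exp (#S * (Real.exp t - 1) * (k * m) / (2 * n) - a) := by
        rw [← Real.exp_add, ← sub_eq_add_neg]

lemma choose_mul_prF_le_mul_vol_le (hn : n ≠ 0) {S : Finset (Lit n)} (hS : S.Nonempty) (t a : ℝ) :
    (2 * n).choose #S * prF n k m (fun Φ => a ≤ t * Vol n k m Φ S)
      ≤ Real.exp (#S * (1 + Real.log 2 + Real.log (n / #S))
          + #S * (Real.exp t - 1) * (k * m) / (2 * n) - a) := by
  have : (#S : ℝ) ≠ 0 := mod_cast hS.card_ne_zero
  have h_choose := choose_le_exp (N := 2 * n) (by positivity) hS.card_pos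
  have h_log : Real.log ((2 * n : ℕ) / #S) = Real.log 2 + Real.log (n / #S) := by
    rw [← Real.log_mul two_ne_zero (by positivity), mul_div_assoc', Nat.cast_mul, Nat.cast_two]
  rw [h_log, ← add_assoc] at h_choose
  rw [add_sub_assoc, Real.exp_add]
  exact mul_le_mul h_choose (prF_le_mul_vol_le hn S t a) (prF_nonneg _) (Real.exp_nonneg _)

lemma choose_mul_prF_ten_mul_lt_vol_le (hn : n ≠ 0) {S : Finset (Lit n)} (hS : S.Nonempty) {M : ℝ}
    (hM : 1 ≤ M) (hm : k * m ≤ M * n) (hlog : Real.log (n / #S) ≤ M) :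
    (2 * n).choose #S * prF n k m (fun Φ => 10 * #S * M < Vol n k m Φ S) ≤ ((n : ℝ) ^ 2)⁻¹ := by
  have hs : (1 : ℝ) ≤ #S := mod_cast hS.card_pos
  have h_prF : prF n k m (fun Φ => 10 * #S * M < Vol n k m Φ S)
      ≤ prF n k m (fun Φ => 10 * #S * M ≤ 1 * Vol n k m Φ S) :=
    prF_mono fun Φ hΦ => by simpa only [one_mul] using hΦ.le
  have h_entropy : #S * (1 + Real.log 2 + Real.log (n / #S)) ≤ #S * (3 * M) := by
    gcongr
    linarith [Real.log_two_lt_d9]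
  have h_moment : #S * (Real.exp 1 - 1) * (k * m) / (2 * n) ≤ #S * M := by
    have h_exp : Real.exp 1 - 1 ≤ 2 := by linarith [Real.exp_one_lt_d9]
    rw [div_le_iff₀ (by positivity)]
    calc #S * (Real.exp 1 - 1) * (k * m) ≤ #S * 2 * (M * n) := by gcongr
      _ = #S * M * (2 * n) := by ring
  have h_log_n : Real.log n ≤ #S * M := by
    have h_split : Real.log n = Real.log (n / #S) + Real.log #S := by
      rw [← Real.log_mul (by positivity) (by positivity), div_mul_cancel₀ _ (by positivity)]
    have h_log_card := Real.log_le_sub_one_of_pos (zero_lt_one.trans_le hs)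
    linarith [mul_nonneg (sub_nonneg.mpr hs) (sub_nonneg.mpr hM)]
  have h_nonneg : 0 ≤ #S * M := by positivity
  calc (2 * n).choose #S * prF n k m (fun Φ => 10 * #S * M < Vol n k m Φ S)
      ≤ Real.exp (#S * (1 + Real.log 2 + Real.log (n / #S))
          + #S * (Real.exp 1 - 1) * (k * m) / (2 * n) - 10 * #S * M) :=
        (mul_le_mul_of_nonneg_left h_prF (Nat.cast_nonneg _)).trans
          (choose_mul_prF_le_mul_vol_le hn hS _ _)
    _ ≤ Real.exp (-Real.log ((n : ℝ) ^ 2)) := by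
        rw [Real.exp_le_exp, Real.log_pow]
        push_cast
        linarith
    _ = ((n : ℝ) ^ 2)⁻¹ := by rw [Real.exp_neg, Real.exp_log (by positivity)]

lemma prF_exists_ten_mul_lt_vol_le (hn : n ≠ 0) {r : ℝ} (hkr : 1 ≤ k * r) (hm : m ≤ r * n) :
    prF n k m (fun Φ => ∃ S : Finset (Lit n), S.Nonempty ∧
        10 * #S * max (k * r) (Real.log (n / #S)) < Vol n k m Φ S)
      ≤ (2 * n + 1) * ((n : ℝ) ^ 2)⁻¹ := by
  refine prF_exists_le_of_choose_mul_prF_le (by positivity) fun S hS => ?_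
  refine choose_mul_prF_ten_mul_lt_vol_le hn hS (le_max_of_le_left hkr) ?_ (le_max_right _ _)
  calc (k : ℝ) * m ≤ k * (r * n) := by gcongr
    _ = k * r * n := by ring
    _ ≤ max (k * r) (Real.log (n / #S)) * n := by gcongr; exact le_max_left _ _

lemma choose_mul_prF_vol_lt_third_mul_le (hn : n ≠ 0) {c r : ℝ} (hc : 0 < c) (hr : 0 ≤ r)
    (hcr : 40 * (3 - Real.log c) ≤ k * (r - 7)) (hm : r * n - 1 ≤ m) {S : Finset (Lit n)}
    (hS : n * c ≤ #S) :
    (2 * n).choose #S * prF n k m (fun Φ => Vol n k m Φ S < 1 / 3 * #S * k * r)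
      ≤ Real.exp (-(c * n)) := by
  have hn_pos : (1 : ℝ) ≤ n := mod_cast Nat.one_le_iff_ne_zero.mpr hn
  have hs : (0 : ℝ) < #S := lt_of_lt_of_le (by positivity) hS
  have h_prF : prF n k m (fun Φ => Vol n k m Φ S < 1 / 3 * #S * k * r)
      ≤ prF n k m (fun Φ => Real.log (2 / 3) * (1 / 3 * #S * k * r)
          ≤ Real.log (2 / 3) * Vol n k m Φ S) :=
    prF_mono fun Φ hΦ => mul_le_mul_of_nonpos_left hΦ.le
      (Real.log_nonpos (by norm_num) (by norm_num))
  have h_entropy : 1 + Real.log 2 + Real.log (n / #S) ≤ 2 - Real.log c := by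
    have h_ratio : (n : ℝ) / #S ≤ c⁻¹ := by
      rw [div_le_iff₀ hs, ← div_eq_inv_mul, le_div_iff₀ hc]
      exact hS
    have h_log := Real.log_le_log (by positivity) h_ratio
    rw [Real.log_inv] at h_log
    linarith [Real.log_two_lt_d9]
  have h_moment : #S * (Real.exp (Real.log (2 / 3)) - 1) * (k * m) / (2 * n)
      ≤ #S * (-(k * (r - 1) / 6)) := by
    have h_density : (r - 1) * n ≤ m := by linarith
    rw [Real.exp_log (by norm_num), div_le_iff₀ (by positivity)]
    linarith [mul_le_mul_of_nonneg_left h_density (show 0 ≤ (#S : ℝ) * k / 3 by positivity)]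
  have h_threshold : -(Real.log (2 / 3) * (1 / 3 * #S * k * r)) ≤ #S * (0.14 * (k * r)) := by
    linarith [mul_le_mul_of_nonneg_right neg_log_two_thirds_le
      (show 0 ≤ 1 / 3 * #S * k * r by positivity)]
  -- The tilt gains `k * r / 6` and loses `0.42 * (k * r) / 3`; the coefficients differ by
  -- `2 / 75 > 1 / 40`, which is where the `40` in `hcr` comes from.
  have h_rate : 2 - Real.log c - k * (r - 1) / 6 + 0.14 * (k * r) ≤ -1 := by
    have hkr : 0 ≤ k * r := by positivity
    linarith [Nat.cast_nonneg (α := ℝ) k]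
  refine (mul_le_mul_of_nonneg_left h_prF (Nat.cast_nonneg _)).trans <|
    (choose_mul_prF_le_mul_vol_le hn (card_pos.mp (mod_cast hs)) _ _).trans ?_
  rw [Real.exp_le_exp]
  linarith [mul_le_mul_of_nonneg_left h_entropy hs.le, mul_le_mul_of_nonneg_left h_rate hs.le]

lemma prF_exists_vol_lt_third_mul_le (hn : n ≠ 0) {c r : ℝ} (hc : 0 < c) (hr : 0 ≤ r)
    (hcr : 40 * (3 - Real.log c) ≤ k * (r - 7)) (hm : r * n - 1 ≤ m) :
    prF n k m (fun Φ => ∃ S : Finset (Lit n), n * c ≤ #S ∧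
        Vol n k m Φ S < 1 / 3 * #S * k * r)
      ≤ (2 * n + 1) * Real.exp (-(c * n)) :=
  prF_exists_le_of_choose_mul_prF_le (Real.exp_nonneg _) fun _ =>
    choose_mul_prF_vol_lt_third_mul_le hn hc hr hcr hm

lemma prF_not_vol_bounds_le (hn : n ≠ 0) {c r : ℝ} (hc : 0 < c) (hkr : 1 ≤ k * r)
    (hcr : 40 * (3 - Real.log c) ≤ k * (r - 7)) :
    prF n k ⌊r * n⌋₊ (fun Φ => ¬ ((∀ S : Finset (Lit n),
        Vol n k _ Φ S ≤ 10 * #S * max (k * r) (Real.log (n / #S))) ∧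
        ∀ S : Finset (Lit n), n * c ≤ #S → 1 / 3 * #S * k * r ≤ Vol n k _ Φ S))
      ≤ (2 * n + 1) * ((n : ℝ) ^ 2)⁻¹ + (2 * n + 1) * Real.exp (-(c * n)) := by
  have hr : 0 ≤ r := (pos_of_mul_pos_right (one_pos.trans_le hkr) (Nat.cast_nonneg k)).le
  refine (prF_le_add_of_imp_or fun Φ hΦ => ?_).trans <| add_le_add
    (prF_exists_ten_mul_lt_vol_le hn hkr (Nat.floor_le (by positivity)))
    (prF_exists_vol_lt_third_mul_le hn hc hr hcr (Nat.sub_one_lt_floor _).le)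
  rw [not_and_or] at hΦ
  push Not at hΦ
  refine hΦ.imp_left fun ⟨S, hS⟩ => ⟨S, nonempty_iff_ne_empty.mpr ?_, hS⟩
  rintro rfl
  simp [Vol] at hS

lemma forty_mul_three_sub_log_two_rpow_le {r : ℝ} (hk : 1 ≤ k) (hr : 150 ≤ r) :
    40 * (3 - Real.log ((2 : ℝ) ^ (-(0.8 : ℝ) * k))) ≤ k * (r - 7) := by
  have hk' : (1 : ℝ) ≤ k := mod_cast hk
  rw [Real.log_rpow two_pos]
  calc 40 * (3 - -0.8 * k * Real.log 2) = 120 + k * (32 * Real.log 2) := by ring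
    _ ≤ k * 120 + k * 23 := by
      gcongr
      · linarith
      · linarith [Real.log_two_lt_d9]
    _ = k * (150 - 7) := by ring
    _ ≤ k * (r - 7) := by gcongr

theorem statement10_general (hk : 1 ≤ k) {r : ℝ} (hr : 150 ≤ r) :
    Tendsto
      (fun n : ℕ => prF n k ⌊r * n⌋₊ fun Φ =>
        (∀ S : Finset (Lit n), Vol n k _ Φ S ≤ 10 * #S * max (k * r) (Real.log (n / #S))) ∧
        ∀ S : Finset (Lit n), n * (2 : ℝ) ^ (-(0.8 : ℝ) * k) ≤ #S →
          1 / 3 * #S * k * r ≤ Vol n k _ Φ S)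
      atTop (nhds 1) := by
  have hc : (0 : ℝ) < (2 : ℝ) ^ (-(0.8 : ℝ) * k) := by positivity
  have hkr : 1 ≤ k * r := one_le_mul_of_one_le_of_one_le (mod_cast hk) (by linarith)
  have h_lower := (tendsto_const_nhds (x := (1 : ℝ))).sub
    (tendsto_two_mul_add_one_mul_inv_sq.add (tendsto_two_mul_add_one_mul_exp_neg hc))
  rw [add_zero, sub_zero] at h_lower
  refine tendsto_of_tendsto_of_tendsto_of_le_of_le' h_lower tendsto_const_nhds ?_
    (Eventually.of_forall fun n => prF_le_one _)
  filter_upwards [eventually_ne_atTop 0] with n hn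
  have h_fail := prF_not_vol_bounds_le hn hc hkr (forty_mul_three_sub_log_two_rpow_le hk hr)
  exact (sub_le_sub_left h_fail 1).trans (one_sub_prF_not_le hn _)

end RandomFormula

lemma le_two_pow_mul_log_two_sub {k : ℕ} {rho : ℝ} (hk : 8 ≤ k) (hrho : rho ≤ 2) :
    150 ≤ 2 ^ k * Real.log 2 - rho := by
  have h_pow : (2 : ℝ) ^ 8 ≤ 2 ^ k := pow_le_pow_right₀ one_le_two hk
  have h_mul := mul_le_mul h_pow Real.log_two_gt_d9.le (by norm_num) (by positivity)
  norm_num at h_mul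
  linarith

/-- For `k ≥ k0` and `r = 2^k ln 2 - ρ` with `0 < ρ ≤ 2`, whp the degree
sequence satisfies: `Vol(S) ≤ 10 |S| max{k r, ln(n/|S|)}` for every set `S` of literals,
and `Vol(S) ≥ (1/3) |S| k r` for every `S` with `|S| ≥ n 2^{-0.8 k}`. -/
theorem statement10 :
    ∃ k0 : ℕ, ∀ k : ℕ, k0 ≤ k → ∀ rho : ℝ, 0 < rho → rho ≤ 2 →
      Tendsto
        (fun n : ℕ =>
          let r := 2 ^ k * Real.log 2 - rho
          let m := ⌊r * (n : ℝ)⌋₊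
          prF n k m fun Φ =>
            (∀ S : Finset (Lit n),
              (Vol n k m Φ S : ℝ) ≤
                10 * (S.card : ℝ) * max ((k : ℝ) * r) (Real.log ((n : ℝ) / (S.card : ℝ)))) ∧
            (∀ S : Finset (Lit n), (n : ℝ) * (2 : ℝ) ^ (-(0.8 : ℝ) * k) ≤ (S.card : ℝ) →
              (1 / 3 : ℝ) * (S.card : ℝ) * (k : ℝ) * r ≤ (Vol n k m Φ S : ℝ)))
        atTop (nhds 1) := by
  exact ⟨8, fun k hk rho _ hrho =>
    statement10_general (by omega) (le_two_pow_mul_log_two_sub hk hrho)⟩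
end
end
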